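/- Let U ⊆ ℝ⁴ ≅ ℂ² be an open set and ω : U → {real antisymmetric 4×4 matrices} a smooth map with ⋆ω(u) = ±ω(u) and det(E₄ − ω(u)θ∓) ≠ 0 for all u ∈ U, and let h : U → {2×2 complex Hermitian matrices} be the map determined pointwise by ι_sym(h(u)) = 2(E₄ − ω(u)θ∓)⁻¹ − E₄. Then det(h(u)) = 1 for every u ∈ U, and consequently the Ricci curvature of the Hermitian metric h vanishes: ∂_{z̄ⱼ}∂_{z_k} log det h = 0 on U for all j, k ∈ {1,2}, i.e. h is a Ricci-flat (Hermitian-Einstein) metric on U. -/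

import Mathlib

open Matrix

namespace Paper

/-- The Levi-Civita symbol on four indices, as the product of signs of differences. -/
def leviCivita (k l m n : Fin 4) : ℝ :=
  ((Int.sign ((l : ℤ) - (k : ℤ)) * Int.sign ((m : ℤ) - (k : ℤ)) *
    Int.sign ((n : ℤ) - (k : ℤ)) * Int.sign ((m : ℤ) - (l : ℤ)) *
    Int.sign ((n : ℤ) - (l : ℤ)) * Int.sign ((n : ℤ) - (m : ℤ)) : ℤ) : ℝ)

/-- The Hodge star operator on 4×4 real matrices:
`(⋆ω)_{kl} = (1/2) ∑_{m,n} ε_{klmn} ω_{mn}`. -/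
noncomputable def hodgeStar (ω : Matrix (Fin 4) (Fin 4) ℝ) : Matrix (Fin 4) (Fin 4) ℝ :=
  Matrix.of fun k l => (1 / 2 : ℝ) * ∑ m : Fin 4, ∑ n : Fin 4, leviCivita k l m n * ω m n

/-- The self-dual matrix `θ⁺`. -/
def thetaPlus (θ : ℝ) : Matrix (Fin 4) (Fin 4) ℝ :=
  !![0, -θ, 0, 0; θ, 0, 0, 0; 0, 0, 0, -θ; 0, 0, θ, 0]

/-- The anti-self-dual matrix `θ⁻`. -/
def thetaMinus (θ : ℝ) : Matrix (Fin 4) (Fin 4) ℝ :=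
  !![0, -θ, 0, 0; θ, 0, 0, 0; 0, 0, 0, θ; 0, 0, -θ, 0]


/-- The map `ι_sym` from 2×2 complex Hermitian matrices to real symmetric 4×4 matrices. -/
noncomputable def iotaSym (h : Matrix (Fin 2) (Fin 2) ℂ) : Matrix (Fin 4) (Fin 4) ℝ :=
  !![(h 0 0).re, 0, ((h 0 1 + h 1 0) / 2).re, ((h 1 0 - h 0 1) / (2 * Complex.I)).re;
     0, (h 0 0).re, (-((h 1 0 - h 0 1) / (2 * Complex.I))).re, ((h 0 1 + h 1 0) / 2).re;
     ((h 0 1 + h 1 0) / 2).re, (-((h 1 0 - h 0 1) / (2 * Complex.I))).re, (h 1 1).re, 0;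
     ((h 1 0 - h 0 1) / (2 * Complex.I)).re, ((h 0 1 + h 1 0) / 2).re, 0, (h 1 1).re]

/-- The partial derivative `∂_{x^μ}` of a function on `ℝ⁴` with complex values. -/
noncomputable def partialD (μ : Fin 4) (f : (Fin 4 → ℝ) → ℂ) (x : Fin 4 → ℝ) : ℂ :=
  fderiv ℝ f x (Pi.single μ 1)

/-- The Wirtinger derivative `∂_{z_k}` with respect to the complex coordinates
`z₁ = x² + i x¹`, `z₂ = x⁴ + i x³` on `ℝ⁴`. -/
noncomputable def delZ (k : Fin 2) (f : (Fin 4 → ℝ) → ℂ) (x : Fin 4 → ℝ) : ℂ :=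
  if k = 0 then (1 / 2 : ℂ) * (partialD 1 f x - Complex.I * partialD 0 f x)
  else (1 / 2 : ℂ) * (partialD 3 f x - Complex.I * partialD 2 f x)

/-- The Wirtinger derivative `∂_{z̄_k}`. -/
noncomputable def delZbar (k : Fin 2) (f : (Fin 4 → ℝ) → ℂ) (x : Fin 4 → ℝ) : ℂ :=
  if k = 0 then (1 / 2 : ℂ) * (partialD 1 f x + Complex.I * partialD 0 f x)
  else (1 / 2 : ℂ) * (partialD 3 f x + Complex.I * partialD 2 f x)

/-! The Hodge star is self-adjoint for the trace form and satisfies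
`ω ⋆η + η ⋆ω = ½ tr(ω ⋆η) • 1` on antisymmetric matrices. Hence a self-dual and an anti-self-dual
matrix commute, are trace-orthogonal and each square to a scalar, so `A = ωT` is traceless with
`A² = c • 1`. For such an `A` the Cayley transform `H = 2(1 - A)⁻¹ - 1` satisfies
`H² - ½ tr(H) H + 1 = 0`. On the other hand `ι_sym` turns the characteristic equation of `h` into
`H² - ½ tr(H) H + det h = 0`, and comparing the two gives `det h = 1`. -/

section Cayley

variable {n R K : Type*} [Fintype n] [DecidableEq n] [CommRing R] [Field K]

/-- The Cayley transform `(1 + A)(1 - A)⁻¹`, written as `2(1 - A)⁻¹ - 1`, the form in which it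
enters the definition of the metric. It is meaningful only when `1 - A` is invertible. -/
noncomputable def cayley (A : Matrix n n R) : Matrix n n R :=
  2 * (1 - A)⁻¹ - 1

theorem cayley_mul_one_sub {A : Matrix n n R} (hA : IsUnit (1 - A).det) :
    cayley A * (1 - A) = 1 + A := by
  rw [cayley, sub_mul, mul_assoc, nonsing_inv_mul _ hA]
  noncomm_ring

theorem one_sub_mul_one_add {A : Matrix n n R} {c : R} (hsq : A * A = c • 1) :
    (1 - A) * (1 + A) = (1 - c) • 1 := by
  rw [sub_smul, one_smul, ← hsq]
  noncomm_ring

theorem one_sub_smul_cayley {A : Matrix n n R} {c : R} (hA : IsUnit (1 - A).det)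
    (hsq : A * A = c • 1) : (1 - c) • cayley A = (1 + c) • 1 + (2 : R) • A :=
  calc (1 - c) • cayley A = cayley A * ((1 - A) * (1 + A)) := by
        rw [one_sub_mul_one_add hsq, mul_smul_comm, mul_one]
    _ = (1 + A) * (1 + A) := by rw [← mul_assoc, cayley_mul_one_sub hA]
    _ = (1 + c) • 1 + (2 : R) • A := by
        rw [add_smul, one_smul, ← hsq, two_smul]
        noncomm_ring

theorem one_sub_ne_zero_of_trace_eq_zero [CharZero K] [Nonempty n] {A : Matrix n n K} {c : K}
    (hA : IsUnit (1 - A).det) (hsq : A * A = c • 1) (htr : A.trace = 0) : 1 - c ≠ 0 := by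
  intro hc
  have hprod : (1 - A) * (1 + A) = 0 := by rw [one_sub_mul_one_add hsq, hc, zero_smul]
  have hsum : 1 + A = 0 := ((isUnit_iff_isUnit_det _).2 hA).mul_right_eq_zero.1 hprod
  have hcard : (Fintype.card n : K) = 0 := by
    simpa [trace_add, htr] using congrArg trace hsum
  exact Fintype.card_ne_zero (Nat.cast_eq_zero.1 hcard)

theorem card_smul_cayley_mul_self_add_one [CharZero K] [Nonempty n] {A : Matrix n n K} {c : K}
    (hA : IsUnit (1 - A).det) (hsq : A * A = c • 1) (htr : A.trace = 0) :
    (Fintype.card n : K) • (cayley A * cayley A + 1) = (2 * (cayley A).trace) • cayley A := by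
  have hc : 1 - c ≠ 0 := one_sub_ne_zero_of_trace_eq_zero hA hsq htr
  have hH := one_sub_smul_cayley hA hsq
  have htrace : (1 - c) * (cayley A).trace = (1 + c) * Fintype.card n := by
    simpa [trace_add, trace_smul, htr] using congrArg trace hH
  have hsquare : (1 - c) • (cayley A * cayley A + 1) = (2 * (1 + c)) • cayley A := by
    refine smul_right_injective _ hc ?_
    calc (1 - c) • (1 - c) • (cayley A * cayley A + 1)
        = ((1 - c) • cayley A) * ((1 - c) • cayley A) + ((1 - c) * (1 - c)) • 1 := by
          rw [smul_mul_smul_comm, smul_add, smul_add, smul_smul, smul_smul]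
      _ = (2 * (1 + c)) • ((1 + c) • 1 + (2 : K) • A) := by
          rw [hH]
          simp only [mul_add, add_mul, smul_mul_assoc, mul_smul_comm, one_mul, mul_one, hsq]
          module
      _ = (1 - c) • (2 * (1 + c)) • cayley A := by rw [← hH, smul_comm]
  refine smul_right_injective _ hc ?_
  calc (1 - c) • (Fintype.card n : K) • (cayley A * cayley A + 1)
      = (2 * ((1 + c) * Fintype.card n)) • cayley A := by
        rw [smul_comm, hsquare, smul_smul]
        ring_nf
    _ = (1 - c) • (2 * (cayley A).trace) • cayley A := by
        rw [← htrace, smul_smul]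
        ring_nf

end Cayley

section HodgeStar

variable {ω η : Matrix (Fin 4) (Fin 4) ℝ} {s : ℝ}

theorem hodgeStar_eq (ω : Matrix (Fin 4) (Fin 4) ℝ) :
    hodgeStar ω = (1 / 2 : ℝ) •
      !![0, ω 2 3 - ω 3 2, ω 3 1 - ω 1 3, ω 1 2 - ω 2 1;
         ω 3 2 - ω 2 3, 0, ω 0 3 - ω 3 0, ω 2 0 - ω 0 2;
         ω 1 3 - ω 3 1, ω 3 0 - ω 0 3, 0, ω 0 1 - ω 1 0;
         ω 2 1 - ω 1 2, ω 0 2 - ω 2 0, ω 1 0 - ω 0 1, 0] := by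
  have sign_two : Int.sign 2 = 1 := rfl
  have sign_three : Int.sign 3 = 1 := rfl
  ext k l
  fin_cases k <;> fin_cases l <;>
    simp [hodgeStar, leviCivita, Fin.sum_univ_four, sign_two, sign_three] <;> ring

theorem transpose_hodgeStar (ω : Matrix (Fin 4) (Fin 4) ℝ) :
    (hodgeStar ω)ᵀ = -hodgeStar ω := by
  rw [hodgeStar_eq]
  ext k l
  fin_cases k <;> fin_cases l <;> simp <;> ring

theorem transpose_eq_neg_of_hodgeStar_eq_smul (hs : s ≠ 0) (hω : hodgeStar ω = s • ω) :
    ωᵀ = -ω := by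
  have hskew := transpose_hodgeStar ω
  rw [hω, transpose_smul, ← smul_neg] at hskew
  exact smul_right_injective _ hs hskew

theorem trace_mul_hodgeStar (ω η : Matrix (Fin 4) (Fin 4) ℝ) :
    (ω * hodgeStar η).trace = (hodgeStar ω * η).trace := by
  rw [trace_mul_comm (hodgeStar ω), hodgeStar_eq, hodgeStar_eq]
  simp only [trace, diag_apply, mul_apply, Matrix.smul_apply, smul_eq_mul, of_apply, cons_val',
    cons_val_fin_one, cons_val, cons_val_zero, cons_val_one, Fin.sum_univ_four]
  ring

theorem mul_hodgeStar_add_mul_hodgeStar (hω : ωᵀ = -ω) (hη : ηᵀ = -η) :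
    ω * hodgeStar η + η * hodgeStar ω = ((ω * hodgeStar η).trace / 2) • 1 := by
  have hω' (k l : Fin 4) : ω l k = -ω k l := congr_fun₂ hω k l
  have hη' (k l : Fin 4) : η l k = -η k l := congr_fun₂ hη k l
  rw [hodgeStar_eq, hodgeStar_eq]
  ext k l
  fin_cases k <;> fin_cases l <;>
    simp [trace, mul_apply, Fin.sum_univ_four] <;> grind

theorem mul_self_of_hodgeStar_eq_smul (hs : s ≠ 0) (hω : hodgeStar ω = s • ω) :
    ω * ω = ((ω * ω).trace / 4) • 1 := by
  have hskew := transpose_eq_neg_of_hodgeStar_eq_smul hs hω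
  have hpolar := mul_hodgeStar_add_mul_hodgeStar hskew hskew
  rw [hω, mul_smul_comm, trace_smul, smul_eq_mul] at hpolar
  refine smul_right_injective _ (mul_ne_zero two_ne_zero hs) ?_
  calc (2 * s) • (ω * ω) = s • (ω * ω) + s • (ω * ω) := by module
    _ = (s * (ω * ω).trace / 2) • 1 := hpolar
    _ = (2 * s) • ((ω * ω).trace / 4) • 1 := by module

theorem trace_mul_eq_zero_of_hodgeStar (hs : s ≠ 0) (hω : hodgeStar ω = s • ω)
    (hη : hodgeStar η = -s • η) : (ω * η).trace = 0 := by
  have hadj := trace_mul_hodgeStar ω η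
  rw [hω, hη, mul_smul_comm, smul_mul_assoc, trace_smul, trace_smul, neg_smul, smul_eq_mul] at hadj
  exact (mul_eq_zero.1 (by linarith : s * (ω * η).trace = 0)).resolve_left hs

theorem commute_of_hodgeStar (hs : s ≠ 0) (hω : hodgeStar ω = s • ω)
    (hη : hodgeStar η = -s • η) : Commute ω η := by
  have hpolar := mul_hodgeStar_add_mul_hodgeStar
    (transpose_eq_neg_of_hodgeStar_eq_smul hs hω)
    (transpose_eq_neg_of_hodgeStar_eq_smul (neg_ne_zero.2 hs) hη)
  rw [hω, hη, mul_smul_comm, mul_smul_comm, trace_smul, trace_mul_eq_zero_of_hodgeStar hs hω hη,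
    smul_zero, zero_div, zero_smul, neg_smul, neg_add_eq_zero] at hpolar
  exact smul_right_injective _ hs hpolar

theorem mul_mul_mul_self_of_hodgeStar (hs : s ≠ 0) (hω : hodgeStar ω = s • ω)
    (hη : hodgeStar η = -s • η) :
    ω * η * (ω * η) = ((ω * ω).trace / 4 * ((η * η).trace / 4)) • 1 :=
  calc ω * η * (ω * η) = ω * ω * (η * η) :=
        (commute_of_hodgeStar hs hω hη).symm.mul_mul_mul_comm ω η
    _ = ((ω * ω).trace / 4) • 1 * (((η * η).trace / 4) • 1) :=
        congr_arg₂ (· * ·) (mul_self_of_hodgeStar_eq_smul hs hω)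
          (mul_self_of_hodgeStar_eq_smul (neg_ne_zero.2 hs) hη)
    _ = ((ω * ω).trace / 4 * ((η * η).trace / 4)) • 1 := by rw [smul_mul_smul_comm, mul_one]

theorem hodgeStar_thetaPlus (θ : ℝ) : hodgeStar (thetaPlus θ) = thetaPlus θ := by
  rw [hodgeStar_eq]
  ext k l
  fin_cases k <;> fin_cases l <;> simp [thetaPlus] <;> ring

theorem hodgeStar_thetaMinus (θ : ℝ) : hodgeStar (thetaMinus θ) = -thetaMinus θ := by
  rw [hodgeStar_eq]
  ext k l
  fin_cases k <;> fin_cases l <;> simp [thetaMinus] <;> ring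

end HodgeStar

section IotaSym

variable {h : Matrix (Fin 2) (Fin 2) ℂ}

theorem iotaSym_eq_of_isHermitian (hh : h.IsHermitian) :
    iotaSym h =
      !![(h 0 0).re, 0, (h 0 1).re, -(h 0 1).im;
         0, (h 0 0).re, (h 0 1).im, (h 0 1).re;
         (h 0 1).re, (h 0 1).im, (h 1 1).re, 0;
         -(h 0 1).im, (h 0 1).re, 0, (h 1 1).re] := by
  have hre : ((h 0 1 + h 1 0) / 2).re = (h 0 1).re := by
    rw [← hh.apply 1 0, Complex.star_def, ← Complex.re_eq_add_conj, Complex.ofReal_re]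
  have him : ((h 1 0 - h 0 1) / (2 * Complex.I)).re = -(h 0 1).im := by
    rw [← hh.apply 1 0, Complex.star_def, ← neg_sub, neg_div, ← Complex.im_eq_sub_conj,
      Complex.neg_re, Complex.ofReal_re]
  simp only [iotaSym, hre, him, Complex.neg_re, neg_neg]

theorem trace_iotaSym (h : Matrix (Fin 2) (Fin 2) ℂ) : (iotaSym h).trace = 2 * h.trace.re := by
  simp only [iotaSym, trace, diag_apply, of_apply, cons_val', cons_val_fin_one, cons_val,
    cons_val_zero, cons_val_one, Fin.sum_univ_four, Fin.sum_univ_two, Complex.add_re]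
  ring

theorem det_im_eq_zero_of_isHermitian (hh : h.IsHermitian) : h.det.im = 0 := by
  rw [← Complex.conj_eq_iff_im, starRingEnd_apply, ← det_conjTranspose, hh.eq]

theorem iotaSym_mul_self (hh : h.IsHermitian) :
    iotaSym h * iotaSym h = h.trace.re • iotaSym h - h.det.re • 1 := by
  have hdet : h.det.re = (h 0 0).re * (h 1 1).re - (h 0 1).re ^ 2 - (h 0 1).im ^ 2 := by
    have h00 : (h 0 0).im = 0 := Complex.conj_eq_iff_im.1 (hh.apply 0 0)
    simp only [det_fin_two, ← hh.apply 1 0, Complex.star_def, Complex.sub_re, Complex.mul_re,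
      Complex.conj_re, Complex.conj_im, h00]
    ring
  rw [iotaSym_eq_of_isHermitian hh, hdet]
  ext k l
  fin_cases k <;> fin_cases l <;>
    simp [mul_apply, Fin.sum_univ_four, trace_fin_two] <;> ring

theorem det_eq_one_of_iotaSym_eq_cayley {A : Matrix (Fin 4) (Fin 4) ℝ} {c : ℝ}
    (hh : h.IsHermitian) (hA : IsUnit (1 - A).det) (hsq : A * A = c • 1) (htr : A.trace = 0)
    (hmet : iotaSym h = cayley A) : h.det = 1 := by
  have hcayley := card_smul_cayley_mul_self_add_one hA hsq htr
  rw [← hmet, trace_iotaSym, iotaSym_mul_self hh] at hcayley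
  have hscalar : (1 - h.det.re) • (1 : Matrix (Fin 4) (Fin 4) ℝ) = 0 := by
    rw [Fintype.card_fin, Nat.cast_ofNat] at hcayley
    calc (1 - h.det.re) • (1 : Matrix (Fin 4) (Fin 4) ℝ)
        = (1 / 4 : ℝ) • ((4 : ℝ) • (h.trace.re • iotaSym h - h.det.re • 1 + 1) -
            (2 * (2 * h.trace.re)) • iotaSym h) := by module
      _ = 0 := by rw [hcayley, sub_self, smul_zero]
  have hre : h.det.re = 1 :=
    (sub_eq_zero.1 ((smul_eq_zero.1 hscalar).resolve_right one_ne_zero)).symm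
  exact Complex.ext hre (det_im_eq_zero_of_isHermitian hh)

theorem det_eq_one_of_hodgeStar {ω η : Matrix (Fin 4) (Fin 4) ℝ} {s : ℝ} (hs : s ≠ 0)
    (hω : hodgeStar ω = s • ω) (hη : hodgeStar η = -s • η) (hh : h.IsHermitian)
    (hdet : (1 - ω * η).det ≠ 0) (hmet : iotaSym h = cayley (ω * η)) : h.det = 1 :=
  det_eq_one_of_iotaSym_eq_cayley hh hdet.isUnit (mul_mul_mul_self_of_hodgeStar hs hω hη)
    (trace_mul_eq_zero_of_hodgeStar hs hω hη) hmet

end IotaSym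

section Wirtinger

open Filter Topology

variable {f : (Fin 4 → ℝ) → ℂ} {c : ℂ} {x : Fin 4 → ℝ}

theorem partialD_eq_zero_of_eventuallyEq_const (hf : f =ᶠ[𝓝 x] fun _ => c) (μ : Fin 4) :
    partialD μ f x = 0 := by
  simp [partialD, hf.fderiv_eq]

theorem delZ_eq_zero_of_eventuallyEq_const (hf : f =ᶠ[𝓝 x] fun _ => c) (k : Fin 2) :
    delZ k f x = 0 := by
  simp [delZ, partialD_eq_zero_of_eventuallyEq_const hf]

theorem delZbar_eq_zero_of_eventuallyEq_const (hf : f =ᶠ[𝓝 x] fun _ => c) (k : Fin 2) :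
    delZbar k f x = 0 := by
  simp [delZbar, partialD_eq_zero_of_eventuallyEq_const hf]

theorem delZbar_delZ_eq_zero_of_eventuallyEq_const (hf : f =ᶠ[𝓝 x] fun _ => c) (j k : Fin 2) :
    delZbar j (delZ k f) x = 0 :=
  delZbar_eq_zero_of_eventuallyEq_const
    (hf.eventuallyEq_nhds.mono fun _ hy => delZ_eq_zero_of_eventuallyEq_const hy k) j

end Wirtinger

theorem ricciFlat_of_selfDual_general
    (U : Set (Fin 4 → ℝ)) (hU : IsOpen U)
    (ω η : (Fin 4 → ℝ) → Matrix (Fin 4) (Fin 4) ℝ)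
    (h : (Fin 4 → ℝ) → Matrix (Fin 2) (Fin 2) ℂ)
    (hsd : ∀ u ∈ U, (hodgeStar (ω u) = ω u ∧ hodgeStar (η u) = -η u) ∨
      (hodgeStar (ω u) = -ω u ∧ hodgeStar (η u) = η u))
    (hdet : ∀ u ∈ U, (1 - ω u * η u).det ≠ 0)
    (hherm : ∀ u ∈ U, (h u).IsHermitian)
    (hmet : ∀ u ∈ U, iotaSym (h u) = cayley (ω u * η u)) :
    (∀ u ∈ U, (h u).det = 1) ∧
    (∀ j k : Fin 2, ∀ u ∈ U,
      delZbar j (delZ k fun x => Complex.log (h x).det) u = 0) := by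
  have hdet_one : ∀ u ∈ U, (h u).det = 1 := by
    intro u hu
    obtain ⟨hω, hη⟩ | ⟨hω, hη⟩ := hsd u hu
    · exact det_eq_one_of_hodgeStar one_ne_zero (by simpa using hω) (by simpa using hη)
        (hherm u hu) (hdet u hu) (hmet u hu)
    · exact det_eq_one_of_hodgeStar (neg_ne_zero.2 one_ne_zero) (by simpa using hω)
        (by simpa using hη) (hherm u hu) (hdet u hu) (hmet u hu)
  refine ⟨hdet_one, fun j k u hu => ?_⟩
  have hlog : (fun x => Complex.log (h x).det) =ᶠ[nhds u] fun _ => 0 := by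
    filter_upwards [hU.mem_nhds hu] with x hx
    rw [hdet_one x hx, Complex.log_one]
  exact delZbar_delZ_eq_zero_of_eventuallyEq_const hlog j k

/-- Hermitian-Einstein metrics from (anti-)self-dual two-forms: if `ω` is a smooth
(anti-)self-dual two-form on an open set `U ⊆ ℝ⁴` with `det (E₄ - ω θ∓) ≠ 0`, and `h` is
the Hermitian-matrix-valued map with `ι_sym (h u) = 2(E₄ - ω(u) θ∓)⁻¹ - E₄`, then
`det (h u) = 1` on `U` and the Ricci curvature `∂_{z̄ⱼ}∂_{z_k} log det h` vanishes on `U`,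
i.e. `h` is a Ricci-flat (Hermitian-Einstein) metric on `U`. -/
theorem ricciFlat_of_selfDual (θ : ℝ) (T : Matrix (Fin 4) (Fin 4) ℝ)
    (U : Set (Fin 4 → ℝ)) (hU : IsOpen U)
    (ω : (Fin 4 → ℝ) → Matrix (Fin 4) (Fin 4) ℝ)
    (h : (Fin 4 → ℝ) → Matrix (Fin 2) (Fin 2) ℂ)
    (hsmooth : ∀ i j : Fin 4, ContDiffOn ℝ (⊤ : ℕ∞) (fun u => ω u i j) U)
    (hanti : ∀ u ∈ U, (ω u)ᵀ = -(ω u))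
    (hsd : ((∀ u ∈ U, hodgeStar (ω u) = ω u) ∧ T = thetaMinus θ) ∨
           ((∀ u ∈ U, hodgeStar (ω u) = -(ω u)) ∧ T = thetaPlus θ))
    (hdet : ∀ u ∈ U, (1 - ω u * T).det ≠ 0)
    (hherm : ∀ u ∈ U, (h u)ᴴ = h u)
    (hmet : ∀ u ∈ U, iotaSym (h u) = 2 * (1 - ω u * T)⁻¹ - 1) :
    (∀ u ∈ U, (h u).det = 1) ∧
    (∀ j k : Fin 2, ∀ u ∈ U,
      delZbar j (fun y => delZ k (fun x => Complex.log ((h x).det)) y) u = 0) := by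
  obtain ⟨hω, rfl⟩ | ⟨hω, rfl⟩ := hsd
  · exact ricciFlat_of_selfDual_general U hU ω (fun _ => thetaMinus θ) h
      (fun u hu => .inl ⟨hω u hu, hodgeStar_thetaMinus θ⟩) hdet hherm hmet
  · exact ricciFlat_of_selfDual_general U hU ω (fun _ => thetaPlus θ) h
      (fun u hu => .inr ⟨hω u hu, hodgeStar_thetaPlus θ⟩) hdet hherm hmet

end Paper
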